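/- Let p ≥ 1 and m ≥ 1 be integers. Then there exists a polynomial q ∈ ℝ[x] with deg q ≤ m such that sup_{x∈[−1,1]} |f_p(x) − q(x)| ≤ 6·(1 − (1 − 1/m)^p), and in particular sup_{x∈[−1,1]} |f_p(x) − q(x)| ≤ 6·p/m. -/

import Mathlib

noncomputable section

/-- The negative part function `f_p`: `f_p(x) = |x|^p` for `x < 0` and `0` otherwise. -/
def negPart (p : ℕ) (x : ℝ) : ℝ := if x < 0 then |x| ^ p else 0

section

open Real Finset Filter

lemma periodic_abs_sin : Function.Periodic (fun x : ℝ => ((|sin x| : ℝ) : ℂ)) π := by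
  intro x
  simp [sin_add_pi]

/-- The function `|sin|` on the circle `ℝ / πℤ`. -/
def absSinCircle : C(AddCircle π, ℂ) where
  toFun := periodic_abs_sin.lift
  continuous_toFun := continuous_coinduced_dom.mpr (by
    change Continuous (fun x : ℝ => ((|sin x| : ℝ) : ℂ))
    fun_prop)

lemma absSinCircle_coe (x : ℝ) : absSinCircle (x : AddCircle π) = ((|sin x| : ℝ) : ℂ) := rfl

lemma one_sub_four_mul_sq_ne_zero (n : ℤ) : (1 - 4 * (n : ℂ) ^ 2) ≠ 0 := by
  have h : (1 - 4 * n ^ 2 : ℤ) ≠ 0 := by omega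
  exact_mod_cast h

lemma fourierCoeff_absSinCircle [Fact (0 < π)] (n : ℤ) :
    fourierCoeff absSinCircle n = ((2 / (π * (1 - 4 * (n : ℝ) ^ 2)) : ℝ) : ℂ) := by
  have hne := one_sub_four_mul_sq_ne_zero n
  have hpi : (π : ℂ) ≠ 0 := by exact_mod_cast pi_ne_zero
  rw [fourierCoeff_eq_intervalIntegral _ n 0, zero_add]
  have hint : ∫ x in (0 : ℝ)..π, fourier (-n) (x : AddCircle π) • absSinCircle x
      = 2 / (1 - 4 * (n : ℂ) ^ 2) := by
    have hd : ∀ x ∈ Set.uIcc 0 π, HasDerivAt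
        (fun x : ℝ => Complex.exp (-(2 * Complex.I * n) * x) *
          (-(2 * Complex.I * n) * Complex.sin x - Complex.cos x) / (1 - 4 * (n : ℂ) ^ 2))
        (fourier (-n) (x : AddCircle π) • absSinCircle x) x := by
      intro x hx
      rw [Set.uIcc_of_le pi_pos.le] at hx
      rw [absSinCircle_coe, abs_of_nonneg (sin_nonneg_of_mem_Icc hx), fourier_coe_apply]
      have h1 : HasDerivAt (fun z : ℂ => Complex.exp (-(2 * Complex.I * n) * z) *
          (-(2 * Complex.I * n) * Complex.sin z - Complex.cos z) / (1 - 4 * (n : ℂ) ^ 2))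
          (Complex.exp (-(2 * Complex.I * n) * x) * Complex.sin x) (x : ℂ) := by
        have he := ((hasDerivAt_id (x : ℂ)).const_mul (-(2 * Complex.I * n))).cexp
        have hs := ((Complex.hasDerivAt_sin x).const_mul (-(2 * Complex.I * n))).sub
          (Complex.hasDerivAt_cos x)
        refine ((he.mul hs).div_const (1 - 4 * (n : ℂ) ^ 2)).congr_deriv ?_
        rw [div_eq_iff hne]
        simp only [id, Pi.sub_apply]
        linear_combination (4 * n ^ 2 * Complex.exp (-(2 * Complex.I * n) * x) * Complex.sin x) *
          Complex.I_sq
      refine h1.comp_ofReal.congr_deriv ?_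
      rw [smul_eq_mul, Complex.ofReal_sin]
      congr 2
      push_cast
      field_simp
    rw [intervalIntegral.integral_eq_sub_of_hasDerivAt hd]
    · have : Complex.exp (-(2 * Complex.I * n) * π) = 1 := by
        rw [Complex.exp_eq_one_iff]
        exact ⟨-n, by push_cast; ring⟩
      rw [this]
      simp
      ring
    · apply Continuous.intervalIntegrable
      fun_prop
  rw [hint, Complex.real_smul]
  push_cast
  field_simp

/-- The Fourier cosine series of `|sin|`. -/
lemma hasSum_abs_sin (x : ℝ) :
    HasSum (fun n : ℕ => 4 / (π * (1 - 4 * (n : ℝ) ^ 2)) * cos (n * (2 * x)))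
      (|sin x| + 2 / π) := by
  have : Fact (0 < π) := ⟨pi_pos⟩
  have hsum : Summable (fourierCoeff absSinCircle) := by
    simp_rw [funext fourierCoeff_absSinCircle, Complex.summable_ofReal]
    have h2 : Summable (fun n : ℤ => 1 / (n : ℝ) ^ 2) :=
      summable_one_div_int_pow.mpr one_lt_two
    refine Summable.of_norm_bounded_eventually h2 ?_
    filter_upwards [eventually_cofinite_ne (0 : ℤ)] with n hn
    have hn2 : (1 : ℝ) ≤ (n : ℝ) ^ 2 := by
      exact_mod_cast Int.add_one_le_of_lt (by positivity : 0 < n ^ 2)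
    rw [norm_eq_abs, abs_div, abs_two, abs_mul, abs_of_pos pi_pos,
      abs_of_neg (by linarith : 1 - 4 * (n : ℝ) ^ 2 < 0),
      div_le_div_iff₀ (mul_pos pi_pos (by linarith)) (by linarith)]
    nlinarith [pi_gt_three]
  have h := (has_pointwise_sum_fourier_series_of_summable hsum x).nat_add_neg
  have h' := Complex.hasSum_re h
  convert h' using 1
  · ext n
    rw [fourierCoeff_absSinCircle, fourierCoeff_absSinCircle, fourier_coe_apply, fourier_coe_apply]
    have e1 : ∀ m : ℤ, 2 * π * Complex.I * m * x / (π : ℂ) = ((m * (2 * x) : ℝ) : ℂ) * Complex.I := by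
      intro m
      have hpi : (π : ℂ) ≠ 0 := by exact_mod_cast pi_ne_zero
      push_cast
      field_simp
    rw [e1, e1]
    simp only [smul_eq_mul, Complex.add_re, Complex.re_ofReal_mul, Complex.exp_ofReal_mul_I_re]
    push_cast
    rw [neg_mul, cos_neg, neg_sq]
    ring
  · rw [absSinCircle_coe, fourierCoeff_absSinCircle, fourier_coe_apply]
    simp [-Complex.ofReal_div]

lemma abs_abs_sin_add_sub_sum_le (K : ℕ) (x : ℝ) :
    |(|sin x| + 2 / π) - ∑ n ∈ range (K + 1), 4 / (π * (1 - 4 * (n : ℝ) ^ 2)) * cos (n * (2 * x))|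
      ≤ 2 / π / (2 * K + 1) := by
  set f : ℕ → ℝ := fun n => 4 / (π * (1 - 4 * (n : ℝ) ^ 2)) * cos (n * (2 * x)) with hf
  have hstep : ∀ k : ℕ, |f (k + 1)| ≤ 2 / π / (2 * k + 1) - 2 / π / (2 * (k + 1 : ℕ) + 1) := by
    intro k
    have hk : (0 : ℝ) ≤ k := k.cast_nonneg
    have e : 2 / π / (2 * k + 1) - 2 / π / (2 * (k + 1 : ℕ) + 1)
        = |4 / (π * (1 - 4 * ((k + 1 : ℕ) : ℝ) ^ 2))| := by
      have : 4 / (π * (1 - 4 * ((k + 1 : ℕ) : ℝ) ^ 2)) =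
          -(4 / (π * ((2 * k + 1) * (2 * k + 3)))) := by
        rw [← div_neg]; push_cast; ring_nf
      rw [this, abs_neg, abs_of_pos (by positivity)]
      push_cast
      field_simp
      ring
    rw [hf, e, abs_mul]
    exact mul_le_of_le_one_right (abs_nonneg _) (abs_cos_le_one _)
  have hpart : ∀ j : ℕ, |∑ n ∈ range (K + j + 1), f n - ∑ n ∈ range (K + 1), f n|
      ≤ 2 / π / (2 * K + 1) - 2 / π / (2 * (K + j : ℕ) + 1) := by
    intro j
    induction j with
    | zero => simp
    | succ j ih =>
      rw [← add_assoc, sum_range_succ, add_sub_right_comm]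
      have := hstep (K + j)
      refine (abs_add_le _ _).trans ?_
      linarith
  have hlim : Tendsto (fun j : ℕ => |∑ n ∈ range (j + (K + 1)), f n - ∑ n ∈ range (K + 1), f n|)
      atTop (nhds |(|sin x| + 2 / π) - ∑ n ∈ range (K + 1), f n|) :=
    ((((tendsto_add_atTop_iff_nat (K + 1)).2 (hasSum_abs_sin x).tendsto_sum_nat)).sub_const _).abs
  refine le_of_tendsto hlim (Eventually.of_forall fun j => ?_)
  have h := hpart j
  rw [show j + (K + 1) = K + j + 1 by ring]
  have : 0 ≤ 2 / π / (2 * ((K + j : ℕ) : ℝ) + 1) := by positivity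
  linarith

/-- The absolute value is uniformly approximated on `[-1, 1]` by polynomials of degree `2 * K`
with error `O(1 / K)`. -/
lemma exists_polynomial_abs_approx (K : ℕ) :
    ∃ P : Polynomial ℝ, P.natDegree ≤ 2 * K ∧
      ∀ x ∈ Set.Icc (-1 : ℝ) 1, |(|x|) - P.eval x| ≤ 2 / π / (2 * K + 1) := by
  refine ⟨∑ n ∈ range (K + 1), Polynomial.C (4 / (π * (1 - 4 * (n : ℝ) ^ 2))) *
    (Polynomial.Chebyshev.T ℝ n).comp (1 - 2 * Polynomial.X ^ 2) - Polynomial.C (2 / π), ?_, ?_⟩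
  · rw [Polynomial.natDegree_sub_C]
    refine Polynomial.natDegree_sum_le_of_forall_le _ _ fun n hn => ?_
    refine (Polynomial.natDegree_C_mul_le _ _).trans (Polynomial.natDegree_comp_le.trans ?_)
    have h1 : (1 - 2 * Polynomial.X ^ 2 : Polynomial ℝ).natDegree ≤ 2 := by compute_degree
    have h2 : (Polynomial.Chebyshev.T ℝ n).natDegree ≤ K := by
      rw [Polynomial.Chebyshev.natDegree_T]
      simp at hn ⊢
      omega
    rw [mul_comm]
    exact Nat.mul_le_mul h1 h2
  · intro x hx
    have h := abs_abs_sin_add_sub_sum_le K (arcsin x)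
    rw [sin_arcsin hx.1 hx.2] at h
    have e : ∀ n : ℕ, cos (n * (2 * arcsin x)) =
        (Polynomial.Chebyshev.T ℝ n).eval (1 - 2 * x ^ 2) := by
      intro n
      have := Polynomial.Chebyshev.T_real_cos (2 * arcsin x) n
      rw [cos_two_mul, cos_sq', sin_arcsin hx.1 hx.2] at this
      push_cast at this
      rw [← this]
      ring_nf
    simp_rw [e] at h
    simp only [Polynomial.eval_sub, Polynomial.eval_finsetSum, Polynomial.eval_mul,
      Polynomial.eval_C, Polynomial.eval_comp, Polynomial.eval_one, Polynomial.eval_pow,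
      Polynomial.eval_X, Polynomial.eval_ofNat]
    convert h using 2
    ring
lemma negPart_eq_pow_mul {p : ℕ} (hp : 1 ≤ p) (x : ℝ) :
    negPart p x = (-x) ^ (p - 1) * ((|x| - x) / 2) := by
  obtain ⟨k, rfl⟩ := Nat.exists_eq_add_of_le' hp
  unfold _root_.negPart
  split_ifs with h
  · rw [abs_of_neg h, Nat.add_sub_cancel, pow_succ]
    ring
  · rw [abs_of_nonneg (not_lt.1 h), sub_self, zero_div, mul_zero]

lemma abs_negPart_le_one (p : ℕ) {x : ℝ} (hx : x ∈ Set.Icc (-1 : ℝ) 1) : |negPart p x| ≤ 1 := by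
  unfold _root_.negPart
  split_ifs
  · rw [abs_pow, abs_abs]
    exact pow_le_one₀ (abs_nonneg _) (abs_le.2 hx)
  · simp

lemma one_sub_one_div_pow_mul_le_one {m : ℕ} (hm : 1 ≤ m) (p : ℕ) :
    (1 - 1 / (m : ℝ)) ^ p * (1 + p / m) ≤ 1 := by
  have hm0 : (1 : ℝ) ≤ m := by exact_mod_cast hm
  have h1 : 0 ≤ 1 / (m : ℝ) := by positivity
  have h2 : 1 / (m : ℝ) ≤ 1 := by rw [div_le_one (by linarith)]; exact hm0
  calc (1 - 1 / (m : ℝ)) ^ p * (1 + p / m)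
      ≤ (1 - 1 / (m : ℝ)) ^ p * (1 + 1 / m) ^ p := by
        refine mul_le_mul_of_nonneg_left ?_ (pow_nonneg (by linarith) _)
        have := one_add_mul_le_pow (a := 1 / (m : ℝ)) (by linarith) p
        rwa [mul_one_div] at this
    _ = (1 - (1 / (m : ℝ)) ^ 2) ^ p := by rw [← mul_pow]; ring
    _ ≤ 1 := pow_le_one₀ (by nlinarith) (by nlinarith)

theorem exists_polynomial_negPart_approx (p m : ℕ) (hp : 1 ≤ p) (hm : 1 ≤ m) :
    ∃ q : Polynomial ℝ, q.natDegree ≤ m ∧ ∀ x ∈ Set.Icc (-1 : ℝ) 1,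
      |negPart p x - q.eval x| ≤ 6 * (1 - (1 - 1 / (m : ℝ)) ^ p) := by
  have hm0 : (1 : ℝ) ≤ m := by exact_mod_cast hm
  have h1 : 0 ≤ 1 / (m : ℝ) := by positivity
  have h2 : 1 / (m : ℝ) ≤ 1 := by rw [div_le_one (by linarith)]; exact hm0
  rcases lt_or_ge m (2 * p) with h | h
  · refine ⟨0, by simp, fun x hx => ?_⟩
    rw [Polynomial.eval_zero, sub_zero]
    refine (abs_negPart_le_one p hx).trans ?_
    have h3 := one_sub_one_div_pow_mul_le_one hm p
    have h4 : (1 / 2 : ℝ) ≤ p / m := by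
      rw [div_le_div_iff₀ (by norm_num) (by linarith)]
      exact_mod_cast (by omega : 1 * m ≤ p * 2)
    have h5 : 0 ≤ (1 - 1 / (m : ℝ)) ^ p := pow_nonneg (by linarith) _
    nlinarith
  · obtain ⟨K, hK1, hK2⟩ : ∃ K : ℕ, 1 ≤ K ∧ 2 * K + (p - 1) ≤ m ∧ m ≤ 2 * (2 * K + 1) :=
      ⟨(m - p + 1) / 2, by omega, by omega, by omega⟩
    obtain ⟨P, hPd, hP⟩ := exists_polynomial_abs_approx K
    refine ⟨(-Polynomial.X) ^ (p - 1) * (Polynomial.C (1 / 2) * (P - Polynomial.X)), ?_, ?_⟩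
    · have hd1 : ((-Polynomial.X : Polynomial ℝ) ^ (p - 1)).natDegree ≤ p - 1 :=
        Polynomial.natDegree_pow_le.trans (by simp)
      have hd2 : (Polynomial.C (1 / 2) * (P - Polynomial.X)).natDegree ≤ 2 * K :=
        (Polynomial.natDegree_C_mul_le _ _).trans
          (Polynomial.natDegree_sub_le_of_le hPd (Polynomial.natDegree_X_le.trans (by omega))
            |>.trans (max_self _).le)
      exact Polynomial.natDegree_mul_le.trans (by omega)
    · intro x hx
      have hpow : |(-x) ^ (p - 1)| ≤ 1 := by
        rw [abs_pow, abs_neg]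
        exact pow_le_one₀ (abs_nonneg _) (abs_le.2 hx)
      have herr : 2 / π / (2 * K + 1) ≤ 2 / (m : ℝ) := by
        rw [div_div, div_le_div_iff₀ (by positivity) (by linarith)]
        have : (m : ℝ) ≤ 2 * (2 * K + 1) := by exact_mod_cast hK2.2
        nlinarith [pi_gt_three]
      have hbern : (1 - 1 / (m : ℝ)) ^ p ≤ 1 - 1 / m :=
        pow_le_of_le_one (by linarith) (by linarith) (by omega)
      have heq : negPart p x -
          ((-Polynomial.X) ^ (p - 1) * (Polynomial.C (1 / 2) * (P - Polynomial.X))).eval x =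
          (-x) ^ (p - 1) * ((|x| - P.eval x) / 2) := by
        rw [negPart_eq_pow_mul hp]
        simp only [Polynomial.eval_mul, Polynomial.eval_pow, Polynomial.eval_neg,
          Polynomial.eval_X, Polynomial.eval_C, Polynomial.eval_sub]
        ring
      rw [heq, abs_mul]
      refine (mul_le_of_le_one_left (abs_nonneg _) hpow).trans ?_
      rw [abs_div, abs_two]
      have := hP x hx
      rw [div_eq_mul_one_div 2 (m : ℝ)] at herr
      linarith

end

/-- there is a polynomial of degree at most `m` approximating `f_p`
uniformly on `[-1,1]` within `6·(1-(1-1/m)^p)`, and in particular within `6·p/m`. -/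
theorem statement15 (p m : ℕ) (hp : 1 ≤ p) (hm : 1 ≤ m) :
    ∃ q : Polynomial ℝ, q.natDegree ≤ m ∧
      (∀ x ∈ Set.Icc (-1 : ℝ) 1,
        |negPart p x - q.eval x| ≤ 6 * (1 - (1 - 1 / (m : ℝ)) ^ p)) ∧
      (∀ x ∈ Set.Icc (-1 : ℝ) 1,
        |negPart p x - q.eval x| ≤ 6 * (p : ℝ) / m) := by
  obtain ⟨q, hq, hbound⟩ := exists_polynomial_negPart_approx p m hp hm
  refine ⟨q, hq, hbound, fun x hx => (hbound x hx).trans ?_⟩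
  have hm0 : (1 : ℝ) ≤ m := by exact_mod_cast hm
  have h2 : 1 / (m : ℝ) ≤ 1 := by rw [div_le_one (by linarith)]; exact hm0
  have h := one_add_mul_le_pow (a := -(1 / (m : ℝ))) (by linarith) p
  rw [← sub_eq_add_neg 1 (1 / (m : ℝ))] at h
  have e : 6 * (p : ℝ) / m = 6 * (p * (1 / m)) := by ring
  rw [e]
  linarith

end
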